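/- For every η > 0 and every t > 0 the value b_{iη}(t) is a positive real number, and for every η > ρ one has ∫₀^∞ b_{iη}(t) Δ(t) dt = 1/(η² − ρ²); in particular the L¹-norm ∫₀^∞ |b_{iη}(t)| Δ(t) dt tends to 0 as η → ∞. -/

import Mathlib

open Complex MeasureTheory Set

noncomputable section

/-- Gauss hypergeometric function ₂F₁ as a power series sum. -/
def hyp (a b c x : ℂ) : ℂ :=
  ∑' n : ℕ, (ascPochhammer ℂ n).eval a * (ascPochhammer ℂ n).eval b /
    ((ascPochhammer ℂ n).eval c * (n.factorial : ℂ)) * x ^ n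

/-- ρ = (m₁ + 2 m₂)/2 -/
def rho (m₁ m₂ : ℕ) : ℝ := ((m₁ : ℝ) + 2 * m₂) / 2

/-- Δ(t) = (2 sinh t)^(m₁+m₂) (2 cosh t)^(m₂) -/
def Del (m₁ m₂ : ℕ) (t : ℝ) : ℝ :=
  (2 * Real.sinh t) ^ (m₁ + m₂) * (2 * Real.cosh t) ^ m₂

/-- The solution Φ_λ. -/
def Phi (m₁ m₂ : ℕ) (l : ℂ) (t : ℝ) : ℂ :=
  ((2 * Real.cosh t : ℝ) : ℂ) ^ (Complex.I * l - (rho m₁ m₂ : ℂ)) *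
    hyp (((rho m₁ m₂ : ℂ) - Complex.I * l) / 2) (((m₁ : ℂ) + 2) / 4 - Complex.I * l / 2)
      (1 - Complex.I * l) ((((Real.cosh t) ^ 2 : ℝ) : ℂ))⁻¹

/-- The function b_λ. -/
def bfun (m₁ m₂ : ℕ) (l : ℂ) (t : ℝ) : ℂ :=
  (2 : ℂ) ^ (-(rho m₁ m₂ : ℂ) - 1 - Complex.I * l) *
    (Complex.Gamma (((rho m₁ m₂ : ℂ) - Complex.I * l) / 2) *
      Complex.Gamma (((m₁ : ℂ) + 2) / 4 - Complex.I * l / 2) /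
      (Complex.Gamma (((m₁ : ℂ) + (m₂ : ℂ) + 1) / 2) * Complex.Gamma (1 - Complex.I * l))) *
    Phi m₁ m₂ l t

/-!
At `λ = iη` every parameter of `b_λ` is real and positive, and so is `b_{iη}`. Put `u = (η - ρ)/2`,
`a = (η + ρ)/2` and `v = (m₁ + m₂ + 1)/2`. The substitution `x = (cosh t)⁻²` turns `∫ b_{iη} Δ` into
a multiple of `∫₀¹ x^(u-1) (1 - x)^(v-1) ₂F₁(a, u + v; 1 + a + u; x) dx`. Integrating termwise
against the beta density replaces the parameter `u + v` by `u` and evaluates the series at `1`,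
where the partial sums of `₂F₁(a, u; 1 + a + u; 1)` have a closed form with limit
`Γ(1 + a + u) / (Γ(1 + a) Γ(1 + u))`. All Gamma factors cancel, leaving
`1 / (4 a u) = 1 / (η² - ρ²)`.
-/

section Pochhammer

lemma ascPochhammer_succ_eval_left {R : Type*} [CommSemiring R] (x : R) (n : ℕ) :
    (ascPochhammer R (n + 1)).eval x = x * (ascPochhammer R n).eval (1 + x) := by
  simp [ascPochhammer_succ_left, Polynomial.eval_comp, add_comm]

lemma ascPochhammer_eval_eq_prod_range {R : Type*} [CommSemiring R] (x : R) (n : ℕ) :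
    (ascPochhammer R n).eval x = ∏ j ∈ Finset.range n, (x + j) := by
  induction n with
  | zero => simp
  | succ n ih => rw [ascPochhammer_succ_eval, ih, Finset.prod_range_succ]

lemma ofReal_ascPochhammer_eval (x : ℝ) (n : ℕ) :
    (((ascPochhammer ℝ n).eval x : ℝ) : ℂ) = (ascPochhammer ℂ n).eval (x : ℂ) := by
  simp [ascPochhammer_eval_eq_prod_range]

lemma Gamma_add_natCast {x : ℝ} (hx : 0 < x) (n : ℕ) :
    Real.Gamma (x + n) = Real.Gamma x * (ascPochhammer ℝ n).eval x := by
  induction n with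
  | zero => simp
  | succ n ih =>
    rw [ascPochhammer_succ_eval, ← mul_assoc, ← ih, Nat.cast_succ, ← add_assoc,
      Real.Gamma_add_one (by positivity), mul_comm]

lemma GammaSeq_eq_div_ascPochhammer (x : ℝ) (n : ℕ) :
    Real.GammaSeq x n = (n : ℝ) ^ x * n.factorial / (ascPochhammer ℝ (n + 1)).eval x := by
  rw [Real.GammaSeq, ascPochhammer_eval_eq_prod_range]

end Pochhammer

section Gauss

lemma sum_range_ordinaryHypergeometricCoefficient {K : Type*} [Field K] [CharZero K] {a b : K}
    (hab : ∀ k : ℕ, 1 + a + b + k ≠ 0) (n : ℕ) :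
    ∑ k ∈ Finset.range (n + 1), ordinaryHypergeometricCoefficient a b (1 + a + b) k =
      ordinaryHypergeometricCoefficient (1 + a) (1 + b) (1 + a + b) n := by
  induction n with
  | zero => simp
  | succ n ih =>
    have hn : (n : K) + 1 ≠ 0 := n.cast_add_one_ne_zero
    have hfac : (n.factorial : K) ≠ 0 := by exact_mod_cast n.factorial_ne_zero
    have hc := hab n
    rw [Finset.sum_range_succ, ih]
    simp only [ordinaryHypergeometricCoefficient, ascPochhammer_succ_eval_left a,
      ascPochhammer_succ_eval_left b, ascPochhammer_succ_eval n (1 + a),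
      ascPochhammer_succ_eval n (1 + b), ascPochhammer_succ_eval n (1 + a + b),
      Nat.factorial_succ, Nat.cast_mul, Nat.cast_succ, mul_inv]
    field_simp
    ring

lemma ordinaryHypergeometricCoefficient_one_add_eq_GammaSeq {a b : ℝ} (ha : 0 < a) (hb : 0 < b)
    {n : ℕ} (hn : n ≠ 0) :
    ordinaryHypergeometricCoefficient (1 + a) (1 + b) (1 + a + b) n =
      (a + b) / (a * b) *
        (Real.GammaSeq (a + b) n / (Real.GammaSeq a n * Real.GammaSeq b n)) := by
  have hn : (0 : ℝ) < n := by positivity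
  have hfac : (n.factorial : ℝ) ≠ 0 := by positivity
  have : 0 < a + b := by positivity
  have hA := (ascPochhammer_pos n (1 + a) (by positivity)).ne'
  have hB := (ascPochhammer_pos n (1 + b) (by positivity)).ne'
  have hC := (ascPochhammer_pos n (1 + (a + b)) (by positivity)).ne'
  rw [ordinaryHypergeometricCoefficient, add_assoc 1 a b]
  simp only [GammaSeq_eq_div_ascPochhammer, ascPochhammer_succ_eval_left, Real.rpow_add hn]
  field_simp

lemma tendsto_ordinaryHypergeometricCoefficient_one_add {a b : ℝ} (ha : 0 < a) (hb : 0 < b) :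
    Filter.Tendsto (ordinaryHypergeometricCoefficient (1 + a) (1 + b) (1 + a + b)) Filter.atTop
      (nhds (Real.Gamma (1 + a + b) / (Real.Gamma (1 + a) * Real.Gamma (1 + b)))) := by
  have hΓ : Real.Gamma a * Real.Gamma b ≠ 0 :=
    (mul_pos (Real.Gamma_pos_of_pos ha) (Real.Gamma_pos_of_pos hb)).ne'
  have hab : 0 < a + b := by positivity
  have hlim := (((Real.GammaSeq_tendsto_Gamma (a + b)).div ((Real.GammaSeq_tendsto_Gamma a).mul
    (Real.GammaSeq_tendsto_Gamma b)) hΓ).const_mul ((a + b) / (a * b))).congr'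
    (f₂ := ordinaryHypergeometricCoefficient (1 + a) (1 + b) (1 + a + b)) <| by
      filter_upwards [Filter.eventually_ne_atTop 0] with n hn
      exact (ordinaryHypergeometricCoefficient_one_add_eq_GammaSeq ha hb hn).symm
  rw [div_mul_div_comm] at hlim
  convert! hlim using 2
  rw [add_assoc, add_comm 1 (a + b), add_comm 1 a, add_comm 1 b, Real.Gamma_add_one hab.ne',
    Real.Gamma_add_one ha.ne', Real.Gamma_add_one hb.ne', mul_mul_mul_comm]

lemma ordinaryHypergeometricCoefficient_pos {a b c : ℝ} (ha : 0 < a) (hb : 0 < b) (hc : 0 < c)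
    (n : ℕ) : 0 < ordinaryHypergeometricCoefficient a b c n := by
  have := ascPochhammer_pos n a ha
  have := ascPochhammer_pos n b hb
  have := ascPochhammer_pos n c hc
  rw [ordinaryHypergeometricCoefficient]
  positivity

lemma hasSum_ordinaryHypergeometricCoefficient {a b : ℝ} (ha : 0 < a) (hb : 0 < b) :
    HasSum (ordinaryHypergeometricCoefficient a b (1 + a + b))
      (Real.Gamma (1 + a + b) / (Real.Gamma (1 + a) * Real.Gamma (1 + b))) := by
  rw [hasSum_iff_tendsto_nat_of_nonneg fun n =>
    (ordinaryHypergeometricCoefficient_pos ha hb (by positivity) n).le,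
    ← Filter.tendsto_add_atTop_iff_nat 1]
  simpa only [sum_range_ordinaryHypergeometricCoefficient (a := a) (b := b)
    fun k => by positivity] using tendsto_ordinaryHypergeometricCoefficient_one_add ha hb

end Gauss

section Hypergeometric

lemma ordinaryHypergeometric_pos {a b c x : ℝ} (ha : 0 < a) (hb : 0 < b) (hc : 0 < c)
    (hx₀ : 0 ≤ x) (hx₁ : x < 1) : 0 < ₂F₁ a b c x := by
  have hterm (n : ℕ) : 0 ≤ ordinaryHypergeometricCoefficient a b c n • x ^ n :=
    smul_nonneg (ordinaryHypergeometricCoefficient_pos ha hb hc n).le (pow_nonneg hx₀ n)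
  have hradius : (ordinaryHypergeometricSeries ℝ a b c).radius = 1 :=
    ordinaryHypergeometricSeries_radius_eq_one ℝ a b c fun k =>
      ⟨by linarith [k.cast_nonneg (α := ℝ)], by linarith [k.cast_nonneg (α := ℝ)],
        by linarith [k.cast_nonneg (α := ℝ)]⟩
  have hsum := (ordinaryHypergeometricSeries ℝ a b c).summable (x := x) <| by
    rw [hradius, mem_eball_zero_iff, Real.enorm_of_nonneg hx₀]
    exact ENNReal.ofReal_lt_one.mpr hx₁
  rw [ordinaryHypergeometricSeries_apply_eq'] at hsum
  rw [ordinaryHypergeometric_eq_tsum]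
  exact hsum.tsum_pos hterm 0 (by simp)

lemma hyp_eq_ordinaryHypergeometric (a b c x : ℂ) : hyp a b c x = ₂F₁ a b c x := by
  rw [hyp, ordinaryHypergeometric_eq_tsum]
  refine tsum_congr fun n => ?_
  rw [smul_eq_mul, div_eq_mul_inv, mul_inv]
  ring

lemma ofReal_ordinaryHypergeometric (a b c x : ℝ) :
    ((₂F₁ a b c x : ℝ) : ℂ) = ₂F₁ (a : ℂ) (b : ℂ) (c : ℂ) (x : ℂ) := by
  simp [ordinaryHypergeometric_eq_tsum, ofReal_tsum, ofReal_ascPochhammer_eval]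

end Hypergeometric

section Beta

open ProbabilityTheory

lemma integral_rpow_mul_one_sub_rpow {u v : ℝ} (hu : 0 < u) (hv : 0 < v) :
    ∫ x in Ioo (0 : ℝ) 1, x ^ (u - 1) * (1 - x) ^ (v - 1) = beta u v := by
  have hcast : ∀ x ∈ Ioo (0 : ℝ) 1, (x : ℂ) ^ ((u : ℂ) - 1) * (1 - (x : ℂ)) ^ ((v : ℂ) - 1) =
      ((x ^ (u - 1) * (1 - x) ^ (v - 1) : ℝ) : ℂ) := fun x hx => by
    rw [ofReal_mul, ofReal_cpow hx.1.le, ofReal_cpow (sub_nonneg.mpr hx.2.le)]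
    push_cast
    rfl
  rw [beta_eq_betaIntegralReal u v hu hv, betaIntegral,
    intervalIntegral.integral_of_le zero_le_one, integral_Ioc_eq_integral_Ioo,
    setIntegral_congr_fun measurableSet_Ioo hcast, integral_complex_ofReal, ofReal_re]

lemma integrableOn_rpow_mul_one_sub_rpow {u v : ℝ} (hu : 0 < u) (hv : 0 < v) :
    IntegrableOn (fun x : ℝ => x ^ (u - 1) * (1 - x) ^ (v - 1)) (Ioo 0 1) :=
  .of_integral_ne_zero <| by
    rw [integral_rpow_mul_one_sub_rpow hu hv]
    exact (beta_pos hu hv).ne'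

lemma beta_add_natCast {u v : ℝ} (hu : 0 < u) (hv : 0 < v) (n : ℕ) :
    beta (u + n) v =
      beta u v * ((ascPochhammer ℝ n).eval u / (ascPochhammer ℝ n).eval (u + v)) := by
  rw [beta, beta, add_right_comm, Gamma_add_natCast hu, Gamma_add_natCast (add_pos hu hv)]
  ring

lemma ordinaryHypergeometricCoefficient_mul_beta (a c : ℝ) {u v : ℝ} (hu : 0 < u) (hv : 0 < v)
    (n : ℕ) :
    ordinaryHypergeometricCoefficient a (u + v) c n * beta (u + n) v =
      beta u v * ordinaryHypergeometricCoefficient a u c n := by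
  have := (ascPochhammer_pos n (u + v) (by positivity)).ne'
  rw [beta_add_natCast hu hv, ordinaryHypergeometricCoefficient,
    ordinaryHypergeometricCoefficient]
  field_simp

theorem integral_rpow_mul_one_sub_rpow_mul_ordinaryHypergeometric {a c u v : ℝ} (hu : 0 < u)
    (hv : 0 < v) (hsum : Summable (ordinaryHypergeometricCoefficient a u c)) :
    ∫ x in Ioo (0 : ℝ) 1, x ^ (u - 1) * (1 - x) ^ (v - 1) * ₂F₁ a (u + v) c x =
      beta u v * ∑' n, ordinaryHypergeometricCoefficient a u c n := by
  let F (n : ℕ) (x : ℝ) : ℝ := ordinaryHypergeometricCoefficient a (u + v) c n *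
    (x ^ (u + n - 1) * (1 - x) ^ (v - 1))
  have hun (n : ℕ) : 0 < u + n := by positivity
  have hF_integrable (n : ℕ) : IntegrableOn (F n) (Ioo 0 1) :=
    (integrableOn_rpow_mul_one_sub_rpow (hun n) hv).const_mul _
  have hF_integral (n : ℕ) : ∫ x in Ioo (0 : ℝ) 1, F n x =
      beta u v * ordinaryHypergeometricCoefficient a u c n := by
    rw [integral_const_mul, integral_rpow_mul_one_sub_rpow (hun n) hv,
      ordinaryHypergeometricCoefficient_mul_beta a c hu hv]
  have hF_norm (n : ℕ) : ∫ x in Ioo (0 : ℝ) 1, ‖F n x‖ =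
      |beta u v * ordinaryHypergeometricCoefficient a u c n| := by
    rw [← ordinaryHypergeometricCoefficient_mul_beta a c hu hv, abs_mul,
      abs_of_pos (beta_pos (hun n) hv), ← integral_rpow_mul_one_sub_rpow (hun n) hv,
      ← integral_const_mul]
    refine setIntegral_congr_fun measurableSet_Ioo fun x hx => ?_
    have h₀ := Real.rpow_nonneg hx.1.le (u + n - 1)
    have h₁ := Real.rpow_nonneg (sub_nonneg.mpr hx.2.le) (v - 1)
    rw [norm_mul, Real.norm_of_nonneg (mul_nonneg h₀ h₁), Real.norm_eq_abs]
  have hF_tsum : ∀ x ∈ Ioo (0 : ℝ) 1,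
      x ^ (u - 1) * (1 - x) ^ (v - 1) * ₂F₁ a (u + v) c x = ∑' n, F n x := fun x hx => by
    rw [ordinaryHypergeometric_eq_tsum, ← tsum_mul_left]
    refine tsum_congr fun n => ?_
    simp only [F, ordinaryHypergeometricCoefficient, add_sub_right_comm u (n : ℝ) 1,
      Real.rpow_add_natCast hx.1.ne', smul_eq_mul]
    ring
  rw [setIntegral_congr_fun measurableSet_Ioo hF_tsum, ← tsum_mul_left,
    ← tsum_congr hF_integral]
  refine (hasSum_integral_of_summable_integral_norm hF_integrable ?_).tsum_eq.symm
  simpa only [hF_norm] using (hsum.mul_left _).abs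

end Beta

section InvCoshSq

lemma hasDerivAt_inv_cosh_sq (t : ℝ) : HasDerivAt (fun t : ℝ => (Real.cosh t ^ 2)⁻¹)
    (-(2 * Real.sinh t / Real.cosh t ^ 3)) t := by
  have hc := (Real.cosh_pos t).ne'
  convert! ((Real.hasDerivAt_cosh t).fun_pow 2).fun_inv (pow_ne_zero 2 hc) using 1
  push_cast
  field_simp

lemma injOn_inv_cosh_sq : InjOn (fun t : ℝ => (Real.cosh t ^ 2)⁻¹) (Ioi 0) := by
  intro s hs t ht hst
  have hcosh : Real.cosh s = Real.cosh t :=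
    (sq_eq_sq₀ (Real.cosh_pos s).le (Real.cosh_pos t).le).mp (inv_injective hst)
  exact Real.cosh_injOn (mem_Ici_of_Ioi hs) (mem_Ici_of_Ioi ht) hcosh

lemma image_inv_cosh_sq_Ioi : (fun t : ℝ => (Real.cosh t ^ 2)⁻¹) '' Ioi 0 = Ioo 0 1 := by
  apply Subset.antisymm
  · rintro _ ⟨t, ht, rfl⟩
    have ht : 1 < Real.cosh t := Real.one_lt_cosh.mpr (ne_of_gt ht)
    exact ⟨by positivity, inv_lt_one_of_one_lt₀ (one_lt_pow₀ ht two_ne_zero)⟩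
  · rintro x ⟨hx₀, hx₁⟩
    have hx : 1 < √(x⁻¹) := Real.lt_sqrt_of_sq_lt (by simpa using (one_lt_inv₀ hx₀).mpr hx₁)
    refine ⟨Real.arcosh √(x⁻¹), Real.arcosh_pos hx, ?_⟩
    simp only [Real.cosh_arcosh hx.le, Real.sq_sqrt (inv_nonneg.mpr hx₀.le), inv_inv]

lemma integral_Ioo_zero_one_eq_integral_inv_cosh_sq {E : Type*} [NormedAddCommGroup E]
    [NormedSpace ℝ E] (f : ℝ → E) :
    ∫ x in Ioo (0 : ℝ) 1, f x =
      ∫ t in Ioi (0 : ℝ), (2 * Real.sinh t / Real.cosh t ^ 3) • f (Real.cosh t ^ 2)⁻¹ := by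
  rw [← image_inv_cosh_sq_Ioi, integral_image_eq_integral_abs_deriv_smul measurableSet_Ioi
    (fun t _ => (hasDerivAt_inv_cosh_sq t).hasDerivWithinAt) injOn_inv_cosh_sq]
  refine setIntegral_congr_fun measurableSet_Ioi fun t ht => ?_
  have hs := Real.sinh_pos_iff.mpr ht
  have := Real.cosh_pos t
  rw [abs_neg, abs_of_pos (by positivity)]

lemma sinh_div_cosh_pow_mul_inv_cosh_sq_rpow (u v : ℝ) {t : ℝ} (ht : 0 < t) :
    Real.sinh t / Real.cosh t ^ 3 *
      (((Real.cosh t ^ 2)⁻¹) ^ (u - 1) * (1 - (Real.cosh t ^ 2)⁻¹) ^ (v - 1)) =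
    Real.sinh t ^ (2 * v - 1) * Real.cosh t ^ (1 - 2 * u - 2 * v) := by
  have hs := Real.sinh_pos_iff.mpr ht
  have hc := Real.cosh_pos t
  have hinv : (Real.cosh t ^ 2)⁻¹ = Real.cosh t ^ (-2 : ℝ) := by
    rw [Real.rpow_neg hc.le, Real.rpow_two]
  have hone_sub : 1 - (Real.cosh t ^ 2)⁻¹ = Real.sinh t ^ (2 : ℝ) * Real.cosh t ^ (-2 : ℝ) := by
    rw [← hinv, Real.rpow_two, Real.sinh_sq]
    field_simp
  have hderiv : Real.sinh t / Real.cosh t ^ 3 =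
      Real.sinh t ^ (1 : ℝ) * Real.cosh t ^ (-3 : ℝ) := by
    rw [Real.rpow_neg hc.le, Real.rpow_one, div_eq_mul_inv]
    norm_cast
  rw [hone_sub, hinv, hderiv, Real.mul_rpow (by positivity) (by positivity),
    ← Real.rpow_mul hc.le, ← Real.rpow_mul hc.le, ← Real.rpow_mul hs.le,
    show 2 * v - 1 = 1 + 2 * (v - 1) by ring,
    show 1 - 2 * u - 2 * v = -3 + -2 * (u - 1) + -2 * (v - 1) by ring,
    Real.rpow_add hs, Real.rpow_add hc, Real.rpow_add hc]
  ring

lemma integral_sinh_rpow_mul_cosh_rpow_mul (u v : ℝ) (f : ℝ → ℝ) :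
    ∫ t in Ioi (0 : ℝ), Real.sinh t ^ (2 * v - 1) * Real.cosh t ^ (1 - 2 * u - 2 * v) *
        f (Real.cosh t ^ 2)⁻¹ =
      1 / 2 * ∫ x in Ioo (0 : ℝ) 1, x ^ (u - 1) * (1 - x) ^ (v - 1) * f x := by
  rw [integral_Ioo_zero_one_eq_integral_inv_cosh_sq, ← integral_const_mul]
  refine setIntegral_congr_fun measurableSet_Ioi fun t ht => ?_
  simp only [← sinh_div_cosh_pow_mul_inv_cosh_sq_rpow u v ht, smul_eq_mul]
  ring

end InvCoshSq

theorem integral_sinh_rpow_mul_cosh_rpow_mul_ordinaryHypergeometric {a u v : ℝ} (ha : 0 < a)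
    (hu : 0 < u) (hv : 0 < v) :
    ∫ t in Ioi (0 : ℝ), Real.sinh t ^ (2 * v - 1) * Real.cosh t ^ (1 - 2 * u - 2 * v) *
        ₂F₁ a (u + v) (1 + a + u) (Real.cosh t ^ 2)⁻¹ =
      1 / 2 * (ProbabilityTheory.beta u v *
        (Real.Gamma (1 + a + u) / (Real.Gamma (1 + a) * Real.Gamma (1 + u)))) := by
  have hgauss := hasSum_ordinaryHypergeometricCoefficient ha hu
  rw [integral_sinh_rpow_mul_cosh_rpow_mul, ← hgauss.tsum_eq,
    integral_rpow_mul_one_sub_rpow_mul_ordinaryHypergeometric hu hv hgauss.summable]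

section Kernel

lemma rho_nonneg (m₁ m₂ : ℕ) : 0 ≤ rho m₁ m₂ := by
  rw [rho]
  positivity

/-- The function `b_λ` at `λ = iη` as a real-valued function, with `₂F₁` taken over `ℝ`. -/
def bfunReal (m₁ m₂ : ℕ) (η t : ℝ) : ℝ :=
  2 ^ (-rho m₁ m₂ - 1 + η) *
    (Real.Gamma ((rho m₁ m₂ + η) / 2) * Real.Gamma ((m₁ + 2) / 4 + η / 2) /
      (Real.Gamma ((m₁ + m₂ + 1) / 2) * Real.Gamma (1 + η))) *
    ((2 * Real.cosh t) ^ (-η - rho m₁ m₂) *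
      ₂F₁ ((rho m₁ m₂ + η) / 2) ((m₁ + 2) / 4 + η / 2) (1 + η) (Real.cosh t ^ 2)⁻¹)

lemma bfun_I_mul_ofReal (m₁ m₂ : ℕ) (η t : ℝ) :
    bfun m₁ m₂ (Complex.I * η) t = (bfunReal m₁ m₂ η t : ℂ) := by
  have hI : Complex.I * (Complex.I * η) = -(η : ℂ) := by
    rw [← mul_assoc, I_mul_I, neg_one_mul]
  have htwo : ((2 ^ (-rho m₁ m₂ - 1 + η) : ℝ) : ℂ) = 2 ^ (-(rho m₁ m₂ : ℂ) - 1 - -η) := by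
    rw [ofReal_cpow zero_le_two]
    push_cast
    rw [sub_neg_eq_add]
  have hcosh : (((2 * Real.cosh t) ^ (-η - rho m₁ m₂) : ℝ) : ℂ) =
      ((2 * Real.cosh t : ℝ) : ℂ) ^ (-(η : ℂ) - rho m₁ m₂) := by
    rw [ofReal_cpow (mul_pos two_pos (Real.cosh_pos t)).le]
    push_cast
    rfl
  rw [bfun, Phi, hyp_eq_ordinaryHypergeometric, hI, bfunReal, ofReal_mul (_ * _),
    ofReal_mul (2 ^ (_ : ℝ)), ofReal_mul (_ ^ (_ : ℝ)), htwo, hcosh,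
    ofReal_ordinaryHypergeometric]
  simp only [ofReal_div, ofReal_mul, ← Gamma_ofReal, ofReal_add, ofReal_one, ofReal_ofNat,
    ofReal_natCast, ofReal_inv, sub_neg_eq_add, neg_div]

lemma bfunReal_pos (m₁ m₂ : ℕ) {η t : ℝ} (hη : 0 < η) (ht : 0 < t) : 0 < bfunReal m₁ m₂ η t := by
  have hρ := rho_nonneg m₁ m₂
  have ha : 0 < (rho m₁ m₂ + η) / 2 := by positivity
  have hb : 0 < ((m₁ : ℝ) + 2) / 4 + η / 2 := by positivity
  have hc : 0 < 1 + η := by positivity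
  have : 0 < ((m₁ : ℝ) + m₂ + 1) / 2 := by positivity
  have hx : (Real.cosh t ^ 2)⁻¹ ∈ Ioo (0 : ℝ) 1 := image_inv_cosh_sq_Ioi ▸ mem_image_of_mem _ ht
  have hF := ordinaryHypergeometric_pos ha hb hc hx.1.le hx.2
  have := Real.cosh_pos t
  rw [bfunReal]
  positivity

lemma norm_bfun_I_mul_ofReal (m₁ m₂ : ℕ) {η t : ℝ} (hη : 0 < η) (ht : 0 < t) :
    ‖bfun m₁ m₂ (Complex.I * η) t‖ = bfunReal m₁ m₂ η t := by
  rw [bfun_I_mul_ofReal, norm_real, Real.norm_of_nonneg (bfunReal_pos m₁ m₂ hη ht).le]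

lemma two_rpow_mul_two_mul_cosh_rpow_mul_Del (m₁ m₂ : ℕ) (η t : ℝ) :
    2 ^ (-rho m₁ m₂ - 1 + η) * (2 * Real.cosh t) ^ (-η - rho m₁ m₂) * Del m₁ m₂ t =
      1 / 2 * (Real.sinh t ^ (2 * (((m₁ : ℝ) + m₂ + 1) / 2) - 1) *
        Real.cosh t ^ (1 - 2 * ((η - rho m₁ m₂) / 2) - 2 * (((m₁ : ℝ) + m₂ + 1) / 2))) := by
  have hc := Real.cosh_pos t
  have htwo : (1 / 2 : ℝ) =
      2 ^ (-rho m₁ m₂ - 1 + η) * 2 ^ (-η - rho m₁ m₂) * 2 ^ (m₁ + m₂) * 2 ^ m₂ := by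
    rw [← Real.rpow_natCast _ (m₁ + m₂), ← Real.rpow_natCast _ m₂, ← Real.rpow_add two_pos,
      ← Real.rpow_add two_pos, ← Real.rpow_add two_pos, one_div, ← Real.rpow_neg_one]
    congr 1
    rw [rho]
    push_cast
    ring
  have hsinh : Real.sinh t ^ (2 * (((m₁ : ℝ) + m₂ + 1) / 2) - 1) = Real.sinh t ^ (m₁ + m₂) := by
    rw [← Real.rpow_natCast]
    push_cast
    ring_nf
  have hcosh : Real.cosh t ^ (1 - 2 * ((η - rho m₁ m₂) / 2) - 2 * (((m₁ : ℝ) + m₂ + 1) / 2)) =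
      Real.cosh t ^ (-η - rho m₁ m₂) * Real.cosh t ^ m₂ := by
    rw [← Real.rpow_natCast _ m₂, ← Real.rpow_add hc, rho]
    ring_nf
  rw [htwo, hsinh, hcosh, Del, Real.mul_rpow zero_le_two hc.le, mul_pow, mul_pow]
  ring

theorem integral_bfunReal_mul_Del {m₁ m₂ : ℕ} {η : ℝ} (hη : rho m₁ m₂ < η) :
    ∫ t in Ioi (0 : ℝ), bfunReal m₁ m₂ η t * Del m₁ m₂ t = 1 / (η ^ 2 - rho m₁ m₂ ^ 2) := by
  have hρ := rho_nonneg m₁ m₂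
  set a := (rho m₁ m₂ + η) / 2 with ha_def
  set u := (η - rho m₁ m₂) / 2 with hu_def
  set v := ((m₁ : ℝ) + m₂ + 1) / 2 with hv_def
  have ha : 0 < a := by linarith
  have hu : 0 < u := by linarith
  have hv : 0 < v := by positivity
  have huv : ((m₁ : ℝ) + 2) / 4 + η / 2 = u + v := by rw [hu_def, hv_def, rho]; ring
  have hc : 1 + η = 1 + a + u := by rw [ha_def, hu_def]; ring
  have hdenom : η ^ 2 - rho m₁ m₂ ^ 2 = 4 * (a * u) := by rw [ha_def, hu_def]; ring
  let G := Real.Gamma a * Real.Gamma (u + v) / (Real.Gamma v * Real.Gamma (1 + a + u))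
  have hintegrand : ∀ t ∈ Ioi (0 : ℝ), bfunReal m₁ m₂ η t * Del m₁ m₂ t = G / 2 *
      (Real.sinh t ^ (2 * v - 1) * Real.cosh t ^ (1 - 2 * u - 2 * v) *
        ₂F₁ a (u + v) (1 + a + u) (Real.cosh t ^ 2)⁻¹) := fun t _ => by
    have hpow := two_rpow_mul_two_mul_cosh_rpow_mul_Del m₁ m₂ η t
    rw [← hu_def, ← hv_def] at hpow
    rw [bfunReal, ← ha_def, ← hv_def, huv, hc]
    linear_combination G * ₂F₁ a (u + v) (1 + a + u) (Real.cosh t ^ 2)⁻¹ * hpow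
  have hΓ {x : ℝ} (hx : 0 < x) : Real.Gamma x ≠ 0 := (Real.Gamma_pos_of_pos hx).ne'
  have hΓa := hΓ ha
  have hΓu := hΓ hu
  have hΓv := hΓ hv
  have hΓuv := hΓ (add_pos hu hv)
  have hΓc := hΓ (by positivity : 0 < 1 + a + u)
  rw [setIntegral_congr_fun measurableSet_Ioi hintegrand, integral_const_mul,
    integral_sinh_rpow_mul_cosh_rpow_mul_ordinaryHypergeometric ha hu hv, hdenom,
    ProbabilityTheory.beta, add_comm 1 a, Real.Gamma_add_one ha.ne', add_comm 1 u,
    Real.Gamma_add_one hu.ne']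
  simp only [G, add_comm 1 a] at hΓc ⊢
  field_simp
  norm_num

lemma integral_norm_bfun_mul_Del {m₁ m₂ : ℕ} {η : ℝ} (hη : rho m₁ m₂ < η) :
    ∫ t in Ioi (0 : ℝ), ‖bfun m₁ m₂ (Complex.I * η) t‖ * Del m₁ m₂ t =
      1 / (η ^ 2 - rho m₁ m₂ ^ 2) := by
  rw [← integral_bfunReal_mul_Del hη]
  refine setIntegral_congr_fun measurableSet_Ioi fun t ht => ?_
  simp only [norm_bfun_I_mul_ofReal m₁ m₂ ((rho_nonneg m₁ m₂).trans_lt hη) ht]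

lemma tendsto_one_div_sq_sub_atTop (c : ℝ) :
    Filter.Tendsto (fun η : ℝ => 1 / (η ^ 2 - c)) Filter.atTop (nhds 0) :=
  tendsto_const_nhds.div_atTop <|
    Filter.tendsto_atTop_add_const_right _ _ (Filter.tendsto_pow_atTop two_ne_zero)

end Kernel

theorem stmt7 (m₁ m₂ : ℕ) (hm₁ : 1 ≤ m₁) :
    (∀ η : ℝ, 0 < η → ∀ t : ℝ, 0 < t →
      (bfun m₁ m₂ (Complex.I * η) t).im = 0 ∧ 0 < (bfun m₁ m₂ (Complex.I * η) t).re) ∧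
    (∀ η : ℝ, rho m₁ m₂ < η →
      (∫ t in Set.Ioi (0 : ℝ), bfun m₁ m₂ (Complex.I * η) t * (Del m₁ m₂ t : ℂ)) =
        ((1 / (η ^ 2 - rho m₁ m₂ ^ 2) : ℝ) : ℂ)) ∧
    Filter.Tendsto
      (fun η : ℝ => ∫ t in Set.Ioi (0 : ℝ), ‖bfun m₁ m₂ (Complex.I * η) t‖ * Del m₁ m₂ t)
      Filter.atTop (nhds 0) := by
  refine ⟨fun η hη t ht => ?_, fun η hη => ?_, ?_⟩
  · rw [bfun_I_mul_ofReal]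
    exact ⟨ofReal_im _, bfunReal_pos m₁ m₂ hη ht⟩
  · simp only [bfun_I_mul_ofReal, ← ofReal_mul]
    rw [integral_complex_ofReal, integral_bfunReal_mul_Del hη]
  · refine (tendsto_one_div_sq_sub_atTop (rho m₁ m₂ ^ 2)).congr' ?_
    filter_upwards [Filter.eventually_gt_atTop (rho m₁ m₂)] with η hη
    exact (integral_norm_bfun_mul_Del hη).symm

end
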